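/- (Descent step bound for two-stage methods.) Let $f$ satisfy RSS with parameter $L$ and RSC with parameter $\alpha$ at sparsity level $2s+\ell$ and $2s+s^*$ respectively, where $\ell \ge s^*$. Let $\theta^t$ be a fully corrective iterate with support $S_t$ ($\nabla f(\theta^t)_{S_t} = 0$, $|S_t| \le s$), let $g^t = \nabla f(\theta^t)$, and let $Z_t = S_t \cup T$ where $T$ contains the $\ell$ largest coordinates of $|g^t|$ outside $S_t$. Define $z^t$ by $z^t_{S_t} = \theta^t_{S_t}$, $z^t_{T} = -\frac{1}{L} g^t_{T}$, and $z^t = 0$ elsewhere. Then $f(z^t) - f(\theta^t) \le -\frac{1}{2L}\|g^t_T\|_2^2 \le -\frac{1}{2L}\|g^t_{S^* \setminus S_t}\|_2^2 \le -\frac{\alpha}{L}(f(\theta^t) - f(\theta^*))$, where $\theta^*$ is the $s^*$-sparse minimizer with support $S^*$. -/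

import Mathlib

/-!
Passing from `θt` to `zt` is a gradient step of length `1 / L` on the coordinates in `T`, which
minimises there the quadratic upper model given by restricted smoothness; the minimum is
`-‖g_T‖² / (2 * L)`. Dually, the quadratic lower model given by restricted strong convexity is,
by completing squares, at least `-‖g_{S* \ St}‖² / (2 * α)`, because the gradient vanishes on `St`
and `θ* - θt` vanishes off `S* ∪ St`. Finally `T` collects the largest gradient entries off `St`
and is at least as large as `S* \ St`, so `‖g_{S* \ St}‖ ≤ ‖g_T‖`.
-/

open Finset

section LargestEntries

variable {ι M : Type*} [DecidableEq ι] [AddCommMonoid M] [LinearOrder M]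
  [IsOrderedCancelAddMonoid M]

theorem sum_le_sum_of_card_le_of_sdiff_le {A B : Finset ι} {w : ι → M} (hcard : #B ≤ #A)
    (hw : ∀ j ∈ B \ A, 0 ≤ w j) (hw' : ∀ i ∈ A \ B, 0 ≤ w i)
    (hAB : ∀ i ∈ A \ B, ∀ j ∈ B \ A, w j ≤ w i) :
    ∑ j ∈ B, w j ≤ ∑ i ∈ A, w i := by
  rw [← sum_sdiff_le_sum_sdiff]
  obtain hempty | hne := (B \ A).eq_empty_or_nonempty
  · simpa only [hempty, sum_empty] using sum_nonneg hw'
  · obtain ⟨m, hm, hmax⟩ := exists_max_image (B \ A) w hne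
    calc ∑ j ∈ B \ A, w j ≤ #(B \ A) • w m := sum_le_card_nsmul _ _ _ hmax
      _ ≤ #(A \ B) • w m :=
        nsmul_le_nsmul_left (hw m hm) (card_sdiff_le_card_sdiff_iff.mpr hcard)
      _ ≤ ∑ i ∈ A \ B, w i := card_nsmul_le_sum _ _ _ fun i hi => hAB i hi m hm

end LargestEntries

theorem hammingNorm_le_card {ι : Type*} {β : ι → Type*} [Fintype ι] [∀ i, Zero (β i)]
    [∀ i, DecidableEq (β i)] {x : ∀ i, β i} {S : Finset ι} (hx : ∀ i, x i ≠ 0 → i ∈ S) :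
    hammingNorm x ≤ #S :=
  card_le_card fun i hi => hx i (mem_filter.mp hi).2

section QuadraticModel

variable {ι 𝕜 : Type*} [Fintype ι] [Field 𝕜]

/-- The increment `⟨v, g⟩ + c / 2 * ‖v‖²` of the isotropic quadratic model with gradient `g` and
curvature `c` along the displacement `v`. The Euclidean pairing and norm are written as coordinate
sums because `ι → 𝕜` carries the sup norm. -/
def quadraticModel (c : 𝕜) (g v : ι → 𝕜) : 𝕜 :=
  ∑ i, v i * g i + c / 2 * ∑ i, v i ^ 2

theorem quadraticModel_eq_sum (c : 𝕜) (g v : ι → 𝕜) :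
    quadraticModel c g v = ∑ i, (v i * g i + c / 2 * v i ^ 2) := by
  rw [quadraticModel, mul_sum, sum_add_distrib]

theorem quadraticModel_gradient_step [NeZero (2 : 𝕜)] {c : 𝕜} (hc : c ≠ 0) {g v : ι → 𝕜}
    {T : Finset ι} (hvT : ∀ i ∈ T, v i = -(1 / c) * g i) (hv : ∀ i ∉ T, v i = 0) :
    quadraticModel c g v = -(1 / (2 * c)) * ∑ i ∈ T, g i ^ 2 := by
  rw [quadraticModel_eq_sum, mul_sum, ← sum_subset (subset_univ T)]
  · refine sum_congr rfl fun i hi => ?_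
    rw [hvT i hi]
    field_simp
    ring
  · intro i _ hi
    simp [hv i hi]

variable [LinearOrder 𝕜]

/-- Restricted smoothness (RSS) of `f` with gradient map `grad` and parameter `L`: the quadratic
upper bound holds between any two points. Sparsity is imposed on the sum `k` of the numbers of
nonzero entries of the two points, not on the size of the union of their supports. -/
def RestrictedSmooth (f : (ι → 𝕜) → 𝕜) (grad : (ι → 𝕜) → ι → 𝕜) (k : ℕ) (L : 𝕜) : Prop :=
  ∀ x y, hammingNorm x + hammingNorm y ≤ k → f x - f y ≤ quadraticModel L (grad y) (x - y)

/-- Restricted strong convexity (RSC) of `f` with gradient map `grad` and parameter `α`, at a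
sparsity level `k` counted as in `RestrictedSmooth`. -/
def RestrictedStronglyConvex (f : (ι → 𝕜) → 𝕜) (grad : (ι → 𝕜) → ι → 𝕜) (k : ℕ) (α : 𝕜) :
    Prop :=
  ∀ x y, hammingNorm x + hammingNorm y ≤ k → quadraticModel α (grad y) (x - y) ≤ f x - f y

variable [IsStrictOrderedRing 𝕜]

theorem neg_sum_sq_le_quadraticModel {c : 𝕜} (hc : 0 < c) {g v : ι → 𝕜} {B : Finset ι}
    (hB : ∀ i ∉ B, 0 ≤ v i * g i) :
    -(1 / (2 * c)) * ∑ i ∈ B, g i ^ 2 ≤ quadraticModel c g v := by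
  have coordinate_lower_bound (i : ι) :
      -(1 / (2 * c)) * g i ^ 2 ≤ v i * g i + c / 2 * v i ^ 2 := by
    have completed_square : v i * g i + c / 2 * v i ^ 2 =
        -(1 / (2 * c)) * g i ^ 2 + 1 / (2 * c) * (c * v i + g i) ^ 2 := by
      field_simp
      ring
    rw [completed_square]
    exact le_add_of_nonneg_right (by positivity)
  calc -(1 / (2 * c)) * ∑ i ∈ B, g i ^ 2
      ≤ ∑ i ∈ B, (v i * g i + c / 2 * v i ^ 2) := by
        rw [mul_sum]
        exact sum_le_sum fun i _ => coordinate_lower_bound i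
    _ ≤ ∑ i, (v i * g i + c / 2 * v i ^ 2) :=
        sum_le_sum_of_subset_of_nonneg (subset_univ B) fun i _ hi =>
          add_nonneg (hB i hi) (by positivity)
    _ = quadraticModel c g v := (quadraticModel_eq_sum c g v).symm

variable {f : (ι → 𝕜) → 𝕜} {grad : (ι → 𝕜) → ι → 𝕜} {k : ℕ} {x z : ι → 𝕜}

theorem RestrictedSmooth.sub_le_of_gradient_step {L : 𝕜} (hf : RestrictedSmooth f grad k L)
    (hL : L ≠ 0) (hk : hammingNorm z + hammingNorm x ≤ k) {T : Finset ι}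
    (hzT : ∀ i ∈ T, z i - x i = -(1 / L) * grad x i) (hz : ∀ i ∉ T, z i = x i) :
    f z - f x ≤ -(1 / (2 * L)) * ∑ i ∈ T, grad x i ^ 2 :=
  (hf z x hk).trans_eq <|
    quadraticModel_gradient_step hL hzT fun i hi => sub_eq_zero.mpr (hz i hi)

theorem RestrictedStronglyConvex.sub_le_sum_sq {α : 𝕜}
    (hf : RestrictedStronglyConvex f grad k α) (hα : 0 < α)
    (hk : hammingNorm z + hammingNorm x ≤ k) {B : Finset ι}
    (hB : ∀ i ∉ B, 0 ≤ (z i - x i) * grad x i) :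
    f x - f z ≤ 1 / (2 * α) * ∑ i ∈ B, grad x i ^ 2 := by
  have lower_bound := (neg_sum_sq_le_quadraticModel hα hB).trans (hf z x hk)
  linarith

end QuadraticModel

theorem descent_step_bound_general {ι : Type*} [Fintype ι] [DecidableEq ι] {s k ℓ : ℕ} {α L : ℝ}
    (hα : 0 < α) (hL : 0 < L) (hkℓ : k ≤ ℓ)
    {f : (ι → ℝ) → ℝ} {grad : (ι → ℝ) → ι → ℝ}
    (_hdiff : Differentiable ℝ f) (_hgrad : ∀ x v, fderiv ℝ f x v = ∑ i, grad x i * v i)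
    (hRSS : RestrictedSmooth f grad (2 * s + ℓ) L)
    (hRSC : RestrictedStronglyConvex f grad (2 * s + k) α)
    {y : ι → ℝ} (hy : hammingNorm y ≤ k)
    {S : Finset ι} (hS : #S ≤ s) {x : ι → ℝ} (hx : ∀ i, x i ≠ 0 → i ∈ S)
    (hgS : ∀ i ∈ S, grad x i = 0)
    {T : Finset ι} (hST : Disjoint S T) (hT : #T = ℓ)
    (hTtop : ∀ i ∈ T, ∀ j, j ∉ S → j ∉ T → |grad x j| ≤ |grad x i|)
    {z : ι → ℝ}
    (hz : ∀ i, z i = if i ∈ S then x i else if i ∈ T then -(1 / L) * grad x i else 0) :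
    f z - f x ≤ -(1 / (2 * L)) * ∑ i ∈ T, grad x i ^ 2 ∧
    -(1 / (2 * L)) * ∑ i ∈ T, grad x i ^ 2 ≤
      -(1 / (2 * L)) * ∑ i ∈ ({i | y i ≠ 0} : Finset ι) \ S, grad x i ^ 2 ∧
    -(1 / (2 * L)) * ∑ i ∈ ({i | y i ≠ 0} : Finset ι) \ S, grad x i ^ 2 ≤
      -(α / L) * (f x - f y) := by
  have hx_off (i : ι) (hi : i ∉ S) : x i = 0 := of_not_not (mt (hx i) hi)
  have hx_card : hammingNorm x ≤ s := (hammingNorm_le_card hx).trans hS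
  set B : Finset ι := ({i | y i ≠ 0} : Finset ι) \ S
  refine ⟨?_, ?_, ?_⟩
  · have hz_card : hammingNorm z ≤ #S + #T :=
      (hammingNorm_le_card fun i hi => by grind).trans (card_union_le S T)
    refine hRSS.sub_le_of_gradient_step hL.ne' (by omega) (fun i hi => ?_) (by grind)
    have hiS : i ∉ S := disjoint_right.mp hST hi
    rw [hz, if_neg hiS, if_pos hi, hx_off i hiS, sub_zero]
  · have hBT : #B ≤ #T := (card_le_card sdiff_subset).trans (hy.trans (hkℓ.trans hT.ge))
    have sum_le : ∑ i ∈ B, grad x i ^ 2 ≤ ∑ i ∈ T, grad x i ^ 2 :=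
      sum_le_sum_of_card_le_of_sdiff_le hBT (fun _ _ => sq_nonneg _) (fun _ _ => sq_nonneg _)
        fun i hi j hj => sq_le_sq.mpr (hTtop i (by grind) j (by grind) (by grind))
    exact mul_le_mul_of_nonpos_left sum_le (by simpa using hL.le)
  · have orthogonal_off (i : ι) (hi : i ∉ B) : (y i - x i) * grad x i = 0 := by
      by_cases hiS : i ∈ S
      · rw [hgS i hiS, mul_zero]
      · have hyi : y i = 0 := by grind
        rw [hyi, hx_off i hiS, sub_zero, zero_mul]
    have gap_le : f x - f y ≤ 1 / (2 * α) * ∑ i ∈ B, grad x i ^ 2 :=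
      hRSC.sub_le_sum_sq hα (by omega) fun i hi => (orthogonal_off i hi).ge
    calc -(1 / (2 * L)) * ∑ i ∈ B, grad x i ^ 2
        = -(α / L) * (1 / (2 * α) * ∑ i ∈ B, grad x i ^ 2) := by field_simp
      _ ≤ -(α / L) * (f x - f y) :=
        mul_le_mul_of_nonpos_left gap_le (neg_nonpos.mpr (by positivity))

/-- Descent step bound for two-stage methods (eq. (tst_0) of the paper):
with RSS parameter `L` at level `2s+ℓ`, RSC parameter `α` at level `2s+s*`,
`ℓ ≥ s*`, a fully corrective iterate `θt` supported in `S_t` (`|S_t| ≤ s`,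
gradient vanishing on `S_t`), `T` the `ℓ` largest-magnitude gradient
coordinates outside `S_t`, and `z^t` equal to `θt` on `S_t`, `-(1/L)g^t` on
`T`, zero elsewhere:
`f(z^t) - f(θt) ≤ -(1/2L)‖g_T‖² ≤ -(1/2L)‖g_{S*∖S_t}‖²
  ≤ -(α/L)(f(θt) - f(θ*))`. -/
theorem descent_step_bound (p s sstar ℓ : ℕ) (α L : ℝ)
    (hα : 0 < α) (hL : 0 < L) (hl : sstar ≤ ℓ)
    (f : (Fin p → ℝ) → ℝ) (grad : (Fin p → ℝ) → Fin p → ℝ)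
    (hdiff : Differentiable ℝ f)
    (hgrad : ∀ x v, fderiv ℝ f x v = ∑ i, grad x i * v i)
    (hRSS : ∀ θ1 θ2 : Fin p → ℝ,
      (Finset.univ.filter fun i => θ1 i ≠ 0).card +
          (Finset.univ.filter fun i => θ2 i ≠ 0).card ≤ 2 * s + ℓ →
      f θ1 - f θ2 ≤ (∑ i, (θ1 i - θ2 i) * grad θ2 i) +
        L / 2 * ∑ i, (θ1 i - θ2 i) ^ 2)
    (hRSC : ∀ θ1 θ2 : Fin p → ℝ,
      (Finset.univ.filter fun i => θ1 i ≠ 0).card +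
          (Finset.univ.filter fun i => θ2 i ≠ 0).card ≤ 2 * s + sstar →
      f θ1 - f θ2 ≥ (∑ i, (θ1 i - θ2 i) * grad θ2 i) +
        α / 2 * ∑ i, (θ1 i - θ2 i) ^ 2)
    (θstar : Fin p → ℝ)
    (hθstar_sp : (Finset.univ.filter fun i => θstar i ≠ 0).card ≤ sstar)
    (hθstar_min : ∀ θ : Fin p → ℝ,
      (Finset.univ.filter fun i => θ i ≠ 0).card ≤ sstar → f θstar ≤ f θ)
    (St : Finset (Fin p)) (hSt : St.card ≤ s)
    (θt : Fin p → ℝ) (hθt_supp : ∀ i, θt i ≠ 0 → i ∈ St)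
    (hθt_min : ∀ θ : Fin p → ℝ, (∀ i, θ i ≠ 0 → i ∈ St) → f θt ≤ f θ)
    (hg0 : ∀ i ∈ St, grad θt i = 0)
    (T : Finset (Fin p)) (hTdisj : Disjoint St T) (hTcard : T.card = ℓ)
    (hTtop : ∀ i ∈ T, ∀ j, j ∉ St → j ∉ T → |grad θt j| ≤ |grad θt i|)
    (zt : Fin p → ℝ)
    (hzt : ∀ i, zt i = if i ∈ St then θt i
      else if i ∈ T then -(1 / L) * grad θt i else 0) :
    f zt - f θt ≤ -(1 / (2 * L)) * ∑ i ∈ T, (grad θt i) ^ 2 ∧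
    -(1 / (2 * L)) * ∑ i ∈ T, (grad θt i) ^ 2 ≤
      -(1 / (2 * L)) *
        ∑ i ∈ (Finset.univ.filter fun i => θstar i ≠ 0) \ St,
          (grad θt i) ^ 2 ∧
    -(1 / (2 * L)) *
        ∑ i ∈ (Finset.univ.filter fun i => θstar i ≠ 0) \ St,
          (grad θt i) ^ 2 ≤
      -(α / L) * (f θt - f θstar) := by
  exact descent_step_bound_general hα hL hl hdiff hgrad hRSS hRSC hθstar_sp hSt hθt_supp hg0
    hTdisj hTcard hTtop hzt
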